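/- arXiv:2510.02419 — 4 statements merged into one kernel-verified Lean document; each statement's English description precedes it below -/
import Mathlib

section
/- Let Ω ⊆ ℝⁿ be open and bounded and let f : ℝⁿ → ℝⁿ be continuously differentiable. Suppose the zero set f⁻¹(0) ∩ closure(Ω) is a finite set contained in Ω, and det Df(x) ≠ 0 at every point x of this zero set. Then lim_{ε→0⁺} ∫_Ω |det Df(x)| · (2πε²)^{−n/2} · exp(−‖f(x)‖²/(2ε²)) dx = card(f⁻¹(0) ∩ Ω). (This is Rice's formula for the number density of points defined by n conditions f(x) = 0: N = ⟨|det ∇f| δ^{(n)}(f)⟩ with the Dirac delta realized as a Gaussian limit.) -/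
open MeasureTheory Real Filter
open scoped Topology

/-!
Replace the Gaussian of width `ε` by the dilation `c ^ n * φ (c • y)` of a kernel `φ`, where
`c = ε⁻¹ → ∞`. Near a zero the inverse function theorem makes `f` injective and open, so the change
of variables formula turns the integral over a small neighbourhood `U` of that zero into the mass
which the dilated kernel gives to the neighbourhood `f(U)` of `0`; this tends to `∫ φ`. By
compactness `f` has finitely many zeros, and its norm is bounded below away from these
neighbourhoods, where the dilated kernel tends to zero uniformly because `‖y‖ ^ n * φ y → 0` at
infinity.
-/

open Bornology Module Set
open scoped Pointwise

lemma finite_preimage_singleton_inter_of_injOn_nhds {X Y : Type*} [TopologicalSpace X]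
    [T2Space X] [TopologicalSpace Y] [T1Space Y] {f : X → Y} {K : Set X} {y : Y}
    (hK : IsCompact K) (hf : ContinuousOn f K)
    (hinj : ∀ x ∈ f ⁻¹' {y} ∩ K, ∃ U ∈ 𝓝 x, InjOn f U) :
    (f ⁻¹' {y} ∩ K).Finite := by
  have hcompact : IsCompact (f ⁻¹' {y} ∩ K) := by
    rw [inter_comm]
    exact hK.of_isClosed_subset (hf.preimage_isClosed_of_isClosed hK.isClosed isClosed_singleton)
      inter_subset_left
  refine hcompact.finite (isDiscrete_iff_nhdsNE.2 fun x hx ↦ ?_)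
  obtain ⟨U, hU, hUinj⟩ := hinj x hx
  rw [← disjoint_iff, disjoint_principal_right]
  filter_upwards [mem_nhdsWithin_of_mem_nhds hU, self_mem_nhdsWithin] with z hzU hzx hz
  exact hzx (hUinj hzU (mem_of_mem_nhds hU) (hz.1.trans hx.1.symm))

section InverseFunction

variable {𝕜 E : Type*} [NontriviallyNormedField 𝕜] [CompleteSpace 𝕜] [NormedAddCommGroup E]
  [NormedSpace 𝕜 E] [FiniteDimensional 𝕜 E] {f : E → E}

lemma exists_isOpen_subset_injOn_image_mem_nhds {f' : E →L[𝕜] E} {x : E}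
    (hf : HasStrictFDerivAt f f' x) (hdet : f'.det ≠ 0) {W : Set E} (hW : W ∈ 𝓝 x) :
    ∃ U ⊆ W, IsOpen U ∧ x ∈ U ∧ InjOn f U ∧ f '' U ∈ 𝓝 (f x) := by
  have := FiniteDimensional.complete 𝕜 E
  rw [← ContinuousLinearMap.coe_toContinuousLinearEquivOfDetNeZero f' hdet] at hf
  let e := hf.toOpenPartialHomeomorph f
  have hopen : IsOpen (e.source ∩ interior W) := e.open_source.inter isOpen_interior
  have hx : x ∈ e.source ∩ interior W :=
    ⟨hf.mem_toOpenPartialHomeomorph_source, mem_interior_iff_mem_nhds.2 hW⟩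
  refine ⟨e.source ∩ interior W, inter_subset_right.trans interior_subset, hopen, hx,
    e.injOn.mono inter_subset_left, ?_⟩
  rw [← hf.map_nhds_eq_of_equiv]
  exact image_mem_map (hopen.mem_nhds hx)

lemma exists_finset_eq_and_pairwiseDisjoint_isOpen_injOn {f' : E → E →L[𝕜] E} {K W : Set E}
    {y : E} (hK : IsCompact K) (hfK : ContinuousOn f K)
    (hf : ∀ x ∈ f ⁻¹' {y} ∩ K, HasStrictFDerivAt f (f' x) x)
    (hdet : ∀ x ∈ f ⁻¹' {y} ∩ K, (f' x).det ≠ 0) (hW : ∀ x ∈ f ⁻¹' {y} ∩ K, W ∈ 𝓝 x) :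
    ∃ (Z : Finset E) (U : E → Set E), Z = f ⁻¹' {y} ∩ K ∧ (Z : Set E).PairwiseDisjoint U ∧
      ∀ x ∈ Z, U x ⊆ W ∧ IsOpen (U x) ∧ x ∈ U x ∧ InjOn f (U x) ∧ f '' U x ∈ 𝓝 y := by
  have hlocal : ∀ x ∈ f ⁻¹' {y} ∩ K, ∀ V ∈ 𝓝 x,
      ∃ U ⊆ V, IsOpen U ∧ x ∈ U ∧ InjOn f U ∧ f '' U ∈ 𝓝 (f x) := fun x hx _ hV ↦
    exists_isOpen_subset_injOn_image_mem_nhds (hf x hx) (hdet x hx) hV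
  have hfin : (f ⁻¹' {y} ∩ K).Finite :=
    finite_preimage_singleton_inter_of_injOn_nhds hK hfK fun x hx ↦
      have ⟨U, _, hUo, hxU, hinj, _⟩ := hlocal x hx univ univ_mem
      ⟨U, hUo.mem_nhds hxU, hinj⟩
  obtain ⟨V, hV, hVdisj⟩ := hfin.t2_separation
  choose! U hUVW hU using fun x hx ↦ hlocal x hx (V x ∩ W)
    (inter_mem ((hV x).2.mem_nhds (hV x).1) (hW x hx))
  refine ⟨hfin.toFinset, U, hfin.coe_toFinset, ?_, fun x hx ↦ ?_⟩
  · rw [hfin.coe_toFinset]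
    exact hVdisj.mono_on fun x hx ↦ (hUVW x hx).trans inter_subset_left
  · have hxZ := hfin.mem_toFinset.1 hx
    have hfx : f x = y := hxZ.1
    exact ⟨(hUVW x hxZ).trans inter_subset_right, hfx ▸ hU x hxZ⟩

end InverseFunction

section Integral

variable {X ι κ : Type*} [MeasurableSpace X] {μ : Measure X} {l : Filter κ}

lemma tendsto_setIntegral_mul_zero_of_tendstoUniformlyOn {A : Set X} {g : X → ℝ}
    {F : κ → X → ℝ} (hA : MeasurableSet A) (hg : IntegrableOn g A μ)
    (hF : TendstoUniformlyOn F 0 l A) :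
    Tendsto (fun k ↦ ∫ x in A, g x * F k x ∂μ) l (𝓝 0) := by
  rw [Metric.tendsto_nhds]
  intro η hη
  set I := ∫ x in A, ‖g x‖ ∂μ
  have : 0 ≤ I := integral_nonneg fun _ ↦ norm_nonneg _
  filter_upwards [Metric.tendstoUniformlyOn_iff.1 hF (η / (I + 1)) (by positivity)] with k hk
  have hbound : ∀ x ∈ A, ‖g x * F k x‖ ≤ ‖g x‖ * (η / (I + 1)) := fun x hx ↦ by
    rw [norm_mul]
    gcongr
    simpa using (hk x hx).le
  calc
    dist (∫ x in A, g x * F k x ∂μ) 0 ≤ ∫ x in A, ‖g x‖ * (η / (I + 1)) ∂μ := by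
      rw [dist_zero_right]
      exact norm_integral_le_of_norm_le (hg.norm.mul_const _) (ae_restrict_of_forall_mem hA hbound)
    _ = I * (η / (I + 1)) := integral_mul_const _ _
    _ < η := by rw [mul_div_assoc', div_lt_iff₀ (by positivity)]; linarith

lemma tendsto_setIntegral_of_pairwiseDisjoint {E : Type*} [NormedAddCommGroup E]
    [NormedSpace ℝ E] {F : κ → X → E} {Ω : Set X} {s : Finset ι} {U : ι → Set X} {a : ι → E}
    (hF : ∀ k, IntegrableOn (F k) Ω μ) (hΩ : MeasurableSet Ω)
    (hU : ∀ i ∈ s, MeasurableSet (U i)) (hUΩ : ∀ i ∈ s, U i ⊆ Ω)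
    (hdisj : (s : Set ι).PairwiseDisjoint U)
    (hlim : ∀ i ∈ s, Tendsto (fun k ↦ ∫ x in U i, F k x ∂μ) l (𝓝 (a i)))
    (hrem : Tendsto (fun k ↦ ∫ x in Ω \ ⋃ i ∈ s, U i, F k x ∂μ) l (𝓝 0)) :
    Tendsto (fun k ↦ ∫ x in Ω, F k x ∂μ) l (𝓝 (∑ i ∈ s, a i)) := by
  have hsum := (tendsto_finsetSum s hlim).add hrem
  rw [add_zero] at hsum
  refine hsum.congr fun k ↦ ?_
  rw [← integral_biUnion_finset s hU hdisj fun i hi ↦ (hF k).mono_set (hUΩ i hi)]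
  rw [← setIntegral_union disjoint_sdiff_right (hΩ.diff (s.measurableSet_biUnion hU))
    ((hF k).mono_set (iUnion₂_subset hUΩ)) ((hF k).mono_set sdiff_subset),
    union_sdiff_cancel (iUnion₂_subset hUΩ)]

end Integral

section Kernel

variable {E : Type*} [NormedAddCommGroup E] [NormedSpace ℝ E]

/-- The dilation `x ↦ c ^ dim E * φ (c • x)` of a kernel `φ`, normalized to keep the total mass for
`c > 0`. As `c → ∞` it approximates `∫ φ` times the Dirac delta at `0`. -/
noncomputable def kernelDilation (φ : E → ℝ) (c : ℝ) (x : E) : ℝ :=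
  c ^ finrank ℝ E * φ (c • x)

/-- The integrand `|det Df| φ_c(f)` of Rice's formula, in which the Dirac delta is replaced by the
dilation `φ_c` of the kernel `φ`. -/
noncomputable def riceDensity (φ : E → ℝ) (f : E → E) (c : ℝ) (x : E) : ℝ :=
  |(fderiv ℝ f x).det| * kernelDilation φ c (f x)

variable {φ : E → ℝ} {f : E → E}

lemma continuousOn_det_fderiv {s : Set E} (hf : ∀ x ∈ s, ContDiffAt ℝ 1 f x) :
    ContinuousOn (fun x ↦ (fderiv ℝ f x).det) s := fun x hx ↦
  (ContinuousLinearMap.continuous_det.continuousAt.comp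
    ((hf x hx).fderiv_right (m := 0) le_rfl).continuousAt).continuousWithinAt

lemma continuousOn_riceDensity (hφ : Continuous φ) {s : Set E}
    (hf : ∀ x ∈ s, ContDiffAt ℝ 1 f x) (c : ℝ) : ContinuousOn (riceDensity φ f c) s := by
  have hfs : ContinuousOn f s := fun x hx ↦ (hf x hx).continuousAt.continuousWithinAt
  have hdet := continuousOn_det_fderiv hf
  unfold riceDensity kernelDilation
  fun_prop

lemma tendstoUniformlyOn_kernelDilation
    (hφ : Tendsto (fun x ↦ ‖x‖ ^ finrank ℝ E * φ x) (cobounded E) (𝓝 0)) {δ : ℝ} (hδ : 0 < δ) :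
    TendstoUniformlyOn (kernelDilation φ) 0 atTop {x | δ ≤ ‖x‖} := by
  rw [Metric.tendstoUniformlyOn_iff]
  intro η hη
  obtain ⟨R, -, hR⟩ := (hasBasis_cobounded_norm (E := E)).eventually_iff.1
    (Metric.tendsto_nhds.1 hφ (η * δ ^ finrank ℝ E) (by positivity))
  filter_upwards [eventually_ge_atTop (R / δ), eventually_ge_atTop 0] with c hcR hc x hx
  have hnorm : ‖c • x‖ = c * ‖x‖ := norm_smul_of_nonneg hc x
  have hfar : R ≤ ‖c • x‖ := by
    rw [hnorm]
    exact ((div_le_iff₀ hδ).1 hcR).trans (mul_le_mul_of_nonneg_left hx hc)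
  rw [Pi.zero_apply, dist_zero_left, ← mul_lt_mul_iff_left₀ (pow_pos hδ (finrank ℝ E))]
  calc
    ‖kernelDilation φ c x‖ * δ ^ finrank ℝ E ≤ ‖kernelDilation φ c x‖ * ‖x‖ ^ finrank ℝ E := by
      gcongr
    _ = ‖‖c • x‖ ^ finrank ℝ E * φ (c • x)‖ := by
      simp only [kernelDilation, hnorm, norm_mul, norm_pow, norm_norm, mul_pow]
      ring
    _ < η * δ ^ finrank ℝ E := by simpa using hR hfar

variable [MeasurableSpace E] [BorelSpace E] {μ : Measure E}

lemma tendsto_setIntegral_riceDensity_zero [IsFiniteMeasureOnCompacts μ]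
    (hφ : Tendsto (fun x ↦ ‖x‖ ^ finrank ℝ E * φ x) (cobounded E) (𝓝 0)) {A K : Set E}
    (hA : MeasurableSet A) (hAK : A ⊆ K) (hK : IsCompact K) (hf : ∀ x ∈ K, ContDiffAt ℝ 1 f x)
    (hne : ∀ x ∈ K, f x ≠ 0) :
    Tendsto (fun c ↦ ∫ x in A, riceDensity φ f c x ∂μ) atTop (𝓝 0) := by
  have hfK : ContinuousOn f K := fun x hx ↦ (hf x hx).continuousAt.continuousWithinAt
  obtain ⟨δ, hδ, hδf⟩ := hK.exists_forall_le' hfK.norm fun x hx ↦ norm_pos_iff.2 (hne x hx)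
  have hdet : IntegrableOn (fun x ↦ |(fderiv ℝ f x).det|) A μ :=
    ((continuousOn_det_fderiv hf).abs.integrableOn_compact hK).mono_set hAK
  exact tendsto_setIntegral_mul_zero_of_tendstoUniformlyOn hA hdet
    (((tendstoUniformlyOn_kernelDilation hφ hδ).comp f).mono fun x hx ↦ hδf x (hAK hx))

variable [FiniteDimensional ℝ E] [μ.IsAddHaarMeasure]

lemma tendsto_setIntegral_kernelDilation (hφ : Integrable φ μ) {V : Set E}
    (hVm : MeasurableSet V) (hV : V ∈ 𝓝 0) :
    Tendsto (fun c ↦ ∫ y in V, kernelDilation φ c y ∂μ) atTop (𝓝 (∫ y, φ y ∂μ)) := by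
  have hcover : AECover μ atTop fun c : ℝ ↦ c • V :=
    { ae_eventually_mem := .of_forall fun y ↦ by
        simpa using (absorbent_nhds_zero (𝕜 := ℝ) hV y).filter_mono
          IsOrderBornology.atTop_le_cobounded
      measurableSet := hVm.const_smul₀ }
  refine (hcover.integral_tendsto_of_countably_generated hφ).congr' ?_
  filter_upwards [eventually_gt_atTop 0] with c hc
  simp only [kernelDilation]
  rw [integral_const_mul, Measure.setIntegral_comp_smul_of_pos μ φ V hc, smul_eq_mul,
    mul_inv_cancel_left₀ (pow_pos hc _).ne']

lemma tendsto_setIntegral_riceDensity_of_injOn (hφ : Integrable φ μ) {U : Set E}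
    (hU : MeasurableSet U) (hf : ∀ x ∈ U, DifferentiableAt ℝ f x) (hinj : InjOn f U)
    (himage : f '' U ∈ 𝓝 0) :
    Tendsto (fun c ↦ ∫ x in U, riceDensity φ f c x ∂μ) atTop (𝓝 (∫ y, φ y ∂μ)) := by
  have hf' : ∀ x ∈ U, HasFDerivWithinAt f (fderiv ℝ f x) U x := fun x hx ↦
    (hf x hx).hasFDerivAt.hasFDerivWithinAt
  refine (tendsto_setIntegral_kernelDilation hφ
    (measurable_image_of_fderivWithin hU hf' hinj) himage).congr fun c ↦ ?_
  exact integral_image_eq_integral_abs_det_fderiv_smul μ hU hf' hinj _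

theorem tendsto_setIntegral_riceDensity (hφc : Continuous φ) (hφi : Integrable φ μ)
    (hφ : Tendsto (fun x ↦ ‖x‖ ^ finrank ℝ E * φ x) (cobounded E) (𝓝 0)) {Ω : Set E}
    (hΩ : MeasurableSet Ω) (hΩbdd : IsBounded Ω) (hf : ∀ x ∈ closure Ω, ContDiffAt ℝ 1 f x)
    (hsub : f ⁻¹' {0} ∩ closure Ω ⊆ interior Ω)
    (hdet : ∀ x ∈ f ⁻¹' {0} ∩ closure Ω, (fderiv ℝ f x).det ≠ 0) :
    Tendsto (fun c ↦ ∫ x in Ω, riceDensity φ f c x ∂μ) atTop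
      (𝓝 ((f ⁻¹' {0} ∩ Ω).ncard * ∫ y, φ y ∂μ)) := by
  have hK : IsCompact (closure Ω) := hΩbdd.isCompact_closure
  have hZ : f ⁻¹' {0} ∩ closure Ω = f ⁻¹' {0} ∩ Ω :=
    Subset.antisymm (fun x hx ↦ ⟨hx.1, interior_subset (hsub hx)⟩)
      (inter_subset_inter_right _ subset_closure)
  have hfK : ContinuousOn f (closure Ω) := fun x hx ↦
    (hf x hx).continuousAt.continuousWithinAt
  obtain ⟨Z, U, hZeq, hdisj, hU⟩ := exists_finset_eq_and_pairwiseDisjoint_isOpen_injOn hK hfK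
    (fun x hx ↦ (hf x hx.2).hasStrictFDerivAt one_ne_zero) hdet
    fun x hx ↦ mem_interior_iff_mem_nhds.1 (hsub hx)
  have hlim := tendsto_setIntegral_of_pairwiseDisjoint (μ := μ) (l := atTop)
    (F := riceDensity φ f) (a := fun _ ↦ ∫ y, φ y ∂μ)
    (fun c ↦ ((continuousOn_riceDensity hφc hf c).integrableOn_compact hK).mono_set subset_closure)
    hΩ (fun x hx ↦ (hU x hx).2.1.measurableSet) (fun x hx ↦ (hU x hx).1) hdisj
    (fun x hx ↦ ?near_zero) ?away_from_zeros
  case near_zero =>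
    obtain ⟨hUΩ, hUo, -, hinj, himage⟩ := hU x hx
    exact tendsto_setIntegral_riceDensity_of_injOn hφi hUo.measurableSet
      (fun y hy ↦ (hf y (subset_closure (hUΩ hy))).differentiableAt one_ne_zero) hinj himage
  case away_from_zeros =>
    have hUopen : IsOpen (⋃ x ∈ Z, U x) := isOpen_biUnion fun x hx ↦ (hU x hx).2.1
    refine tendsto_setIntegral_riceDensity_zero hφ (hΩ.diff hUopen.measurableSet)
      (sdiff_subset_sdiff_left subset_closure) (hK.diff hUopen) (fun x hx ↦ hf x hx.1) ?_
    intro x hx hfx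
    have hxZ : x ∈ Z := Finset.mem_coe.1 (hZeq ▸ ⟨hfx, hx.1⟩)
    exact hx.2 (mem_biUnion hxZ (hU x hxZ).2.2.1)
  rwa [Finset.sum_const, nsmul_eq_mul, ← ncard_coe_finset, hZeq, hZ] at hlim

end Kernel

section Gaussian

variable {E : Type*} [NormedAddCommGroup E] [InnerProductSpace ℝ E]

/-- The density of the standard Gaussian measure on `E`; its dilation by `ε⁻¹` is the Gaussian of
width `ε` realizing the Dirac delta in Rice's formula. -/
noncomputable def gaussianKernel (x : E) : ℝ :=
  (2 * π) ^ (-(finrank ℝ E : ℝ) / 2) * rexp (-(1 / 2) * ‖x‖ ^ 2)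

lemma continuous_gaussianKernel : Continuous (gaussianKernel (E := E)) := by
  unfold gaussianKernel
  fun_prop

lemma tendsto_norm_pow_mul_gaussianKernel (k : ℕ) :
    Tendsto (fun x : E ↦ ‖x‖ ^ k * gaussianKernel x) (cobounded E) (𝓝 0) := by
  have hdecay := ((tendsto_rpow_abs_mul_exp_neg_mul_sq_cocompact one_half_pos k).comp
    ((tendsto_norm_cobounded_atTop (E := E)).mono_right atTop_le_cocompact)).const_mul
    ((2 * π) ^ (-(finrank ℝ E : ℝ) / 2))
  simpa [Function.comp_def, gaussianKernel, mul_left_comm] using hdecay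

lemma kernelDilation_gaussianKernel_inv {ε : ℝ} (hε : 0 < ε) (x : E) :
    kernelDilation gaussianKernel ε⁻¹ x =
      (2 * π * ε ^ 2) ^ (-(finrank ℝ E : ℝ) / 2) * rexp (-‖x‖ ^ 2 / (2 * ε ^ 2)) := by
  have hpow : (ε ^ 2) ^ (-(finrank ℝ E : ℝ) / 2) = ε⁻¹ ^ finrank ℝ E := by
    rw [← rpow_natCast_mul hε.le, Nat.cast_ofNat, mul_div_cancel₀ _ two_ne_zero,
      rpow_neg hε.le, rpow_natCast, inv_pow]
  have hexp : -(1 / 2) * ‖ε⁻¹ • x‖ ^ 2 = -‖x‖ ^ 2 / (2 * ε ^ 2) := by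
    rw [norm_smul_of_nonneg (inv_nonneg.2 hε.le)]
    field_simp
  rw [kernelDilation, gaussianKernel, hexp, mul_rpow two_pi_pos.le (sq_nonneg ε), hpow]
  ring

variable [FiniteDimensional ℝ E] [MeasurableSpace E] [BorelSpace E]

lemma integral_gaussianKernel : ∫ x : E, gaussianKernel x = 1 := by
  simp only [gaussianKernel]
  rw [integral_const_mul, GaussianFourier.integral_rexp_neg_mul_sq_norm one_half_pos,
    div_div_eq_mul_div, div_one, mul_comm π, ← rpow_add two_pi_pos, neg_div, neg_add_cancel,
    rpow_zero]

theorem rice_formula_point_count_general {Ω : Set E} (hΩ : MeasurableSet Ω)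
    (hΩbdd : IsBounded Ω) {f : E → E} (hf : ∀ x ∈ closure Ω, ContDiffAt ℝ 1 f x)
    (hsub : f ⁻¹' {0} ∩ closure Ω ⊆ interior Ω)
    (hdet : ∀ x ∈ f ⁻¹' {0} ∩ closure Ω, (fderiv ℝ f x).det ≠ 0) :
    Tendsto (fun ε : ℝ ↦
        ∫ x in Ω, |(fderiv ℝ f x).det| * (2 * π * ε ^ 2) ^ (-(finrank ℝ E : ℝ) / 2) *
          rexp (-‖f x‖ ^ 2 / (2 * ε ^ 2)))
      (𝓝[>] 0) (𝓝 ((f ⁻¹' {0} ∩ Ω).ncard : ℝ)) := by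
  have hlim := tendsto_setIntegral_riceDensity continuous_gaussianKernel
    (integrable_of_integral_eq_one integral_gaussianKernel)
    (tendsto_norm_pow_mul_gaussianKernel _) hΩ hΩbdd hf hsub hdet
  rw [integral_gaussianKernel, mul_one] at hlim
  refine (hlim.comp tendsto_inv_nhdsGT_zero).congr' ?_
  filter_upwards [self_mem_nhdsWithin] with ε hε
  simp only [Function.comp_apply, riceDensity, kernelDilation_gaussianKernel_inv hε, mul_assoc]

end Gaussian

/-- Rice's formula for the number density of points defined by `n` conditions `f(x) = 0`:
`N = ⟨|det ∇f| δ⁽ⁿ⁾(f)⟩`, with the Dirac delta realized as a Gaussian limit. -/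
theorem rice_formula_point_count
    (n : ℕ) (Ω : Set (EuclideanSpace ℝ (Fin n)))
    (hΩopen : IsOpen Ω) (hΩbdd : Bornology.IsBounded Ω)
    (f : EuclideanSpace ℝ (Fin n) → EuclideanSpace ℝ (Fin n)) (hf : ContDiff ℝ 1 f)
    (hfin : (f ⁻¹' {0} ∩ closure Ω).Finite)
    (hsub : f ⁻¹' {0} ∩ closure Ω ⊆ Ω)
    (hdet : ∀ x ∈ f ⁻¹' {0} ∩ closure Ω, (fderiv ℝ f x).det ≠ 0) :
    Tendsto (fun ε : ℝ =>
        ∫ x in Ω, |(fderiv ℝ f x).det| * (2 * π * ε ^ 2) ^ (-(n : ℝ) / 2) *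
          Real.exp (-‖f x‖ ^ 2 / (2 * ε ^ 2)))
      (𝓝[>] 0) (𝓝 ((f ⁻¹' {0} ∩ Ω).ncard : ℝ)) := by
  simpa only [finrank_euclideanSpace_fin] using rice_formula_point_count_general
    hΩopen.measurableSet hΩbdd (fun _ _ ↦ hf.contDiffAt) (hΩopen.interior_eq.symm ▸ hsub) hdet
end

section
/- Let Ψ : ℝ³ → ℝ be three times continuously differentiable and let q ∈ ℝ³ be a point at which the Hessian is diagonal: HΨ(q) = diag(λ₁, λ₂, λ₃) with λ₁ ≠ λ₂ and λ₁ ≠ λ₃. Let (μ, v) be an eigenpair field of HΨ near q with v(q) = e₁, and suppose μ and v are differentiable at q. Then for each j ∈ {1,2,3}, the directional derivative of the eigenvector field is ∂ⱼv(q) = (0, ∂₁∂₂∂ⱼΨ(q)/(λ₁ − λ₂), ∂₁∂₃∂ⱼΨ(q)/(λ₁ − λ₃)). (Eigenframe identity: e.g. ∂₁v₁ = (0, T₁₁₂/(T₁₁ − T₂₂), T₁₁₃/(T₁₁ − T₃₃)).) -/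
/-- The partial derivative `∂ᵢ f` of a scalar field on Euclidean ℝ³. -/
noncomputable def pd (i : Fin 3) (f : EuclideanSpace ℝ (Fin 3) → ℝ)
    (x : EuclideanSpace ℝ (Fin 3)) : ℝ :=
  fderiv ℝ f x (EuclideanSpace.single i 1)

/-!
Near `q` the `i`-th coordinate of the eigenvalue equation reads `D(∂ᵢΨ)(x)(v x) = μ x * v x i`. At
`q` the functional `D(∂ᵢΨ)` is `lᵢ` times the `i`-th coordinate, so when `v q = e_{i₀}` and `i ≠ i₀`
the derivative of this equation in the direction `eⱼ` is
`∂ⱼ∂_{i₀}∂ᵢΨ + lᵢ * (∂ⱼv)ᵢ = l_{i₀} * (∂ⱼv)ᵢ`, where the derivative of `μ` drops out because it is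
multiplied by `v q i = 0`. The `i₀`-th component of `∂ⱼv` vanishes because `v` has constant norm.
-/

open scoped Topology

section EigenvalueEquation

variable {𝕜 E F : Type*} [NontriviallyNormedField 𝕜] [NormedAddCommGroup E] [NormedSpace 𝕜 E]
  [NormedAddCommGroup F] [NormedSpace 𝕜 F]
  {a : E → F →L[𝕜] 𝕜} {φ : F →L[𝕜] 𝕜} {μ : E → 𝕜} {v : E → F} {q : E}

theorem differentiableAt_eigenvalue (ha : DifferentiableAt 𝕜 a q) (hv : DifferentiableAt 𝕜 v q)
    (heig : ∀ᶠ x in 𝓝 q, a x (v x) = μ x * φ (v x)) (hφ : φ (v q) ≠ 0) :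
    DifferentiableAt 𝕜 μ q := by
  have hφv : DifferentiableAt 𝕜 (fun x => φ (v x)) q := φ.differentiableAt.comp q hv
  have hquot : μ =ᶠ[𝓝 q] fun x => a x (v x) * (φ (v x))⁻¹ := by
    filter_upwards [heig, hφv.continuousAt.eventually_ne hφ] with x hx hne
    rw [hx, mul_inv_cancel_right₀ hne]
  exact ((ha.clm_apply hv).fun_mul (hφv.fun_inv hφ)).congr_of_eventuallyEq hquot

theorem apply_fderiv_eigenvector_eq_div {l : 𝕜} (ha : DifferentiableAt 𝕜 a q)
    (hv : DifferentiableAt 𝕜 v q) (hμ : DifferentiableAt 𝕜 μ q)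
    (heig : ∀ᶠ x in 𝓝 q, a x (v x) = μ x * φ (v x)) (haq : a q = l • φ) (hφ : φ (v q) = 0)
    (hl : l ≠ μ q) (h : E) :
    φ (fderiv 𝕜 v q h) = fderiv 𝕜 a q h (v q) / (μ q - l) := by
  have hleft := ha.hasFDerivAt.clm_apply hv.hasFDerivAt
  have hright := hμ.hasFDerivAt.mul (φ.hasFDerivAt.comp q hv.hasFDerivAt)
  have hderiv : l * φ (fderiv 𝕜 v q h) + fderiv 𝕜 a q h (v q) = μ q * φ (fderiv 𝕜 v q h) := by
    simpa [haq, hφ] using DFunLike.congr_fun (hleft.unique (hright.congr_of_eventuallyEq heig)) h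
  rw [eq_div_iff (sub_ne_zero.2 hl.symm)]
  linear_combination -hderiv

end EigenvalueEquation

theorem inner_fderiv_eq_zero_of_eventually_norm_eq {E F : Type*} [NormedAddCommGroup E]
    [NormedSpace ℝ E] [NormedAddCommGroup F] [InnerProductSpace ℝ F] {v : E → F} {q : E} {c : ℝ}
    (hv : DifferentiableAt ℝ v q) (hnorm : ∀ᶠ x in 𝓝 q, ‖v x‖ = c) (h : E) :
    inner ℝ (v q) (fderiv ℝ v q h) = 0 := by
  have hconst : (fun x => ‖v x‖ ^ 2) =ᶠ[𝓝 q] fun _ => c ^ 2 :=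
    hnorm.mono fun x hx => congrArg (· ^ 2) hx
  have hderiv := hv.hasFDerivAt.norm_sq.unique
    ((hasFDerivAt_const (c ^ 2) q).congr_of_eventuallyEq hconst)
  simpa using DFunLike.congr_fun hderiv h

theorem differentiableAt_fderiv {𝕜 E F : Type*} [NontriviallyNormedField 𝕜]
    [NormedAddCommGroup E] [NormedSpace 𝕜 E] [NormedAddCommGroup F] [NormedSpace 𝕜 F]
    {f : E → F} {x : E} (hf : ContDiffAt 𝕜 2 f x) : DifferentiableAt 𝕜 (fderiv 𝕜 f) x :=
  (hf.fderiv_right (m := 1) (by norm_num)).differentiableAt one_ne_zero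

section PartialDeriv

variable {ι : Type*} [Fintype ι] [DecidableEq ι] {f : EuclideanSpace ℝ ι → ℝ}
  {x : EuclideanSpace ℝ ι} {m n : WithTop ℕ∞}

/-- The partial derivative `∂ᵢ f` of a scalar field on the Euclidean space `ℝ^ι`. It extends `pd`
to arbitrary dimension, and `pd` is definitionally the case `ι = Fin 3`. -/
noncomputable def partialDeriv (i : ι) (f : EuclideanSpace ℝ ι → ℝ) (x : EuclideanSpace ℝ ι) : ℝ :=
  fderiv ℝ f x (EuclideanSpace.single i 1)

theorem contDiffAt_partialDeriv (hf : ContDiffAt ℝ n f x) (hmn : m + 1 ≤ n) (i : ι) :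
    ContDiffAt ℝ m (partialDeriv i f) x :=
  (hf.fderiv_right hmn).clm_apply contDiffAt_const

theorem partialDeriv_partialDeriv (hf : ContDiffAt ℝ 2 f x) (i j : ι) :
    partialDeriv i (partialDeriv j f) x =
      fderiv ℝ (fderiv ℝ f) x (EuclideanSpace.single i 1) (EuclideanSpace.single j 1) := by
  change fderiv ℝ (fun y => fderiv ℝ f y (EuclideanSpace.single j 1)) x _ = _
  simp [fderiv_clm_apply (differentiableAt_fderiv hf) (differentiableAt_const _)]

theorem partialDeriv_comm (hf : ContDiffAt ℝ 2 f x) (i j : ι) :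
    partialDeriv i (partialDeriv j f) x = partialDeriv j (partialDeriv i f) x := by
  rw [partialDeriv_partialDeriv hf, partialDeriv_partialDeriv hf]
  exact hf.isSymmSndFDerivAt (by simp) _ _

theorem partialDeriv_rotate (hf : ContDiffAt ℝ 3 f x) (i j k : ι) :
    partialDeriv i (partialDeriv j (partialDeriv k f)) x =
      partialDeriv j (partialDeriv k (partialDeriv i f)) x := by
  have hcomm : partialDeriv i (partialDeriv k f) =ᶠ[𝓝 x] partialDeriv k (partialDeriv i f) :=
    ((hf.of_le (by norm_num)).eventually (by simp)).mono fun _ hy => partialDeriv_comm hy i k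
  calc
    partialDeriv i (partialDeriv j (partialDeriv k f)) x =
        partialDeriv j (partialDeriv i (partialDeriv k f)) x :=
      partialDeriv_comm (contDiffAt_partialDeriv hf (by norm_num) k) i j
    _ = partialDeriv j (partialDeriv k (partialDeriv i f)) x :=
      DFunLike.congr_fun hcomm.fderiv_eq _

theorem sum_partialDeriv_mul (f : EuclideanSpace ℝ ι → ℝ) (x u : EuclideanSpace ℝ ι) :
    ∑ i, partialDeriv i f x * u i = fderiv ℝ f x u := by
  conv_rhs => rw [← (EuclideanSpace.basisFun ι ℝ).sum_repr u]
  simp [partialDeriv, mul_comm]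

theorem sum_partialDeriv_partialDeriv_mul (hf : ContDiffAt ℝ 2 f x) (i : ι)
    (u : EuclideanSpace ℝ ι) :
    ∑ j, partialDeriv i (partialDeriv j f) x * u j = fderiv ℝ (partialDeriv i f) x u := by
  simp only [partialDeriv_comm hf i, sum_partialDeriv_mul]

theorem fderiv_partialDeriv_eq_smul_proj (hf : ContDiffAt ℝ 2 f x) {l : ι → ℝ}
    (hdiag : (Matrix.of fun i j => partialDeriv i (partialDeriv j f) x) = Matrix.diagonal l)
    (i : ι) :
    fderiv ℝ (partialDeriv i f) x = l i • (EuclideanSpace.proj i : EuclideanSpace ℝ ι →L[ℝ] ℝ) := by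
  ext u
  have hrow (j : ι) : partialDeriv i (partialDeriv j f) x = Matrix.diagonal l i j :=
    congrFun₂ hdiag i j
  simp [← sum_partialDeriv_partialDeriv_mul hf, hrow, Matrix.diagonal_apply]

end PartialDeriv

theorem eigenframe_deriv_eigenvector_general {ι : Type*} [Fintype ι] [DecidableEq ι]
    {Ψ : EuclideanSpace ℝ ι → ℝ} {q : EuclideanSpace ℝ ι} (hΨ : ContDiffAt ℝ 3 Ψ q) {l : ι → ℝ}
    (hdiag : (Matrix.of fun i j => partialDeriv i (partialDeriv j Ψ) q) = Matrix.diagonal l)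
    {μ : EuclideanSpace ℝ ι → ℝ} {v : EuclideanSpace ℝ ι → EuclideanSpace ℝ ι}
    (heig : ∀ᶠ x in 𝓝 q, ∀ i, ∑ j, partialDeriv i (partialDeriv j Ψ) x * v x j = μ x * v x i)
    (hnorm : ∀ᶠ x in 𝓝 q, ‖v x‖ = 1) {i₀ : ι} (hvq : v q = EuclideanSpace.single i₀ 1)
    (hv : DifferentiableAt ℝ v q) (j : ι) :
    fderiv ℝ v q (EuclideanSpace.single j 1) i₀ = 0 ∧
      ∀ i, l i ≠ l i₀ → fderiv ℝ v q (EuclideanSpace.single j 1) i =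
        partialDeriv i₀ (partialDeriv i (partialDeriv j Ψ)) q / (l i₀ - l i) := by
  have hΨ₂ : ContDiffAt ℝ 2 Ψ q := hΨ.of_le (by norm_num)
  let φ (i : ι) : EuclideanSpace ℝ ι →L[ℝ] ℝ := EuclideanSpace.proj i
  have hrow (i : ι) : ∀ᶠ x in 𝓝 q, fderiv ℝ (partialDeriv i Ψ) x (v x) = μ x * φ i (v x) := by
    filter_upwards [heig, hΨ₂.eventually (by simp)] with x hx hΨx
    exact (sum_partialDeriv_partialDeriv_mul hΨx i (v x)).symm.trans (hx i)
  have hpartial (i : ι) : ContDiffAt ℝ 2 (partialDeriv i Ψ) q :=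
    contDiffAt_partialDeriv hΨ (by norm_num) i
  have hrow_diff (i : ι) : DifferentiableAt ℝ (fderiv ℝ (partialDeriv i Ψ)) q :=
    differentiableAt_fderiv (hpartial i)
  have hrow_q (i : ι) : fderiv ℝ (partialDeriv i Ψ) q = l i • φ i :=
    fderiv_partialDeriv_eq_smul_proj hΨ₂ hdiag i
  have hμq : μ q = l i₀ := by simpa [hrow_q, φ, hvq] using (hrow i₀).self_of_nhds.symm
  have hμ : DifferentiableAt ℝ μ q :=
    differentiableAt_eigenvalue (hrow_diff i₀) hv (hrow i₀) (by simp [φ, hvq])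
  refine ⟨?_, fun i hi => ?_⟩
  · simpa [hvq, EuclideanSpace.inner_single_left] using
      inner_fderiv_eq_zero_of_eventually_norm_eq hv hnorm (EuclideanSpace.single j 1)
  · have hφ : φ i (v q) = 0 := by simp [φ, hvq, ne_of_apply_ne l hi]
    have hcomp := apply_fderiv_eigenvector_eq_div (hrow_diff i) hv hμ (hrow i) (hrow_q i) hφ
      (hμq ▸ hi) (EuclideanSpace.single j 1)
    rwa [hμq, hvq, ← partialDeriv_partialDeriv (hpartial i), partialDeriv_rotate hΨ] at hcomp

/-- Eigenframe identity for the derivative of the eigenvector field: at a point with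
diagonal Hessian `diag(λ₁, λ₂, λ₃)`, `λ₁ ≠ λ₂`, `λ₁ ≠ λ₃`, an eigenpair field `(μ, v)`
with `v(q) = e₁` satisfies `∂ⱼv(q) = (0, T₁₂ⱼ/(λ₁ − λ₂), T₁₃ⱼ/(λ₁ − λ₃))`. -/
theorem eigenframe_deriv_eigenvector
    (Ψ : EuclideanSpace ℝ (Fin 3) → ℝ) (hΨ : ContDiff ℝ 3 Ψ)
    (q : EuclideanSpace ℝ (Fin 3)) (l1 l2 l3 : ℝ)
    (hdiag : (Matrix.of fun i j => pd i (pd j Ψ) q) = Matrix.diagonal ![l1, l2, l3])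
    (h12 : l1 ≠ l2) (h13 : l1 ≠ l3)
    (μ : EuclideanSpace ℝ (Fin 3) → ℝ)
    (v : EuclideanSpace ℝ (Fin 3) → EuclideanSpace ℝ (Fin 3))
    (U : Set (EuclideanSpace ℝ (Fin 3))) (hU : U ∈ nhds q)
    (heig : ∀ x ∈ U, ∀ i : Fin 3, (∑ j : Fin 3, pd i (pd j Ψ) x * v x j) = μ x * v x i)
    (hnorm : ∀ x ∈ U, ‖v x‖ = 1)
    (hvq : v q = EuclideanSpace.single 0 1)
    (hμdiff : DifferentiableAt ℝ μ q) (hvdiff : DifferentiableAt ℝ v q) :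
    ∀ j : Fin 3,
      fderiv ℝ v q (EuclideanSpace.single j 1) 0 = 0 ∧
      fderiv ℝ v q (EuclideanSpace.single j 1) 1 = pd 0 (pd 1 (pd j Ψ)) q / (l1 - l2) ∧
      fderiv ℝ v q (EuclideanSpace.single j 1) 2 = pd 0 (pd 2 (pd j Ψ)) q / (l1 - l3) :=
  fun j =>
    have hderiv := eigenframe_deriv_eigenvector_general (l := ![l1, l2, l3]) hΨ.contDiffAt hdiag
      (Filter.eventually_of_mem hU heig) (Filter.eventually_of_mem hU hnorm) hvq hvdiff j
    ⟨hderiv.1, hderiv.2 1 h12.symm, hderiv.2 2 h13.symm⟩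
end

section
/- Let Ψ : ℝ³ → ℝ be four times continuously differentiable and let q ∈ ℝ³ be a point at which the Hessian is diagonal: HΨ(q) = diag(λ₁, λ₂, λ₃) with λ₁ ≠ λ₂ and λ₁ ≠ λ₃. Let (μ, v) be an eigenpair field of HΨ near q with v(q) = e₁, and suppose μ and v are twice continuously differentiable near q. Then the second derivative of the eigenvalue field along the first coordinate direction is ∂₁²μ(q) = ∂₁⁴Ψ(q) + 2·(∂₁∂₁∂₂Ψ(q))²/(λ₁ − λ₂) + 2·(∂₁∂₁∂₃Ψ(q))²/(λ₁ − λ₃). (Eigenframe identity: ∂ₓ²λ₁ = T₁₁₁₁ + 2T₁₁₂²/(T₁₁ − T₂₂) + 2T₁₁₃²/(T₁₁ − T₃₃).) -/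
/-!
Along the line `t ↦ q + t • e k` the statement is second-order perturbation theory for the matrix
`A t` of second derivatives. Differentiating `A v = μ v` once at a point where `A = diagonal d`
and `v` is the `k`-th basis vector gives
`A'ᵢₖ = μ' δᵢₖ + (dₖ - dᵢ) v'ᵢ`,
so the `v'ᵢ` with `i ≠ k` are known, while `μ' = A'ₖₖ`. Differentiating twice and reading off the
`k`-th row, `v''` and `v'ₖ` cancel and `μ'' = A''ₖₖ + 2 ∑_{j ≠ k} A'ₖⱼ v'ⱼ`. Symmetry of the second
derivative turns `A'ₖⱼ A'ⱼₖ` into a square.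
-/

open Filter Topology
open scoped Matrix

section EigenvaluePerturbation

lemma eq_of_diagonal_mulVec_single_eq_smul {R ι : Type*} [NonAssocSemiring R] [Fintype ι]
    [DecidableEq ι] {d : ι → R} {c : R} {k : ι}
    (h : Matrix.diagonal d *ᵥ Pi.single k 1 = c • Pi.single k 1) : c = d k := by
  simpa using (congrFun h k).symm

variable {𝕜 ι : Type*} [NontriviallyNormedField 𝕜] [Fintype ι]
  {A : 𝕜 → Matrix ι ι 𝕜} {v : 𝕜 → ι → 𝕜} {μ : 𝕜 → 𝕜} {t₀ : 𝕜}

lemma iteratedDeriv_mulVec_apply {κ : Type*} {B : 𝕜 → Matrix κ ι 𝕜} {n : ℕ} (i : κ)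
    (hB : ∀ j, ContDiffAt 𝕜 n (fun t ↦ B t i j) t₀) (hv : ∀ j, ContDiffAt 𝕜 n (fun t ↦ v t j) t₀) :
    iteratedDeriv n (fun t ↦ (B t *ᵥ v t) i) t₀ =
      ∑ j, ∑ m ∈ Finset.range (n + 1), n.choose m * iteratedDeriv m (fun t ↦ B t i j) t₀ *
        iteratedDeriv (n - m) (fun t ↦ v t j) t₀ := by
  simp only [Matrix.mulVec, dotProduct]
  rw [iteratedDeriv_fun_sum fun j _ ↦ (hB j).mul (hv j)]
  exact Finset.sum_congr rfl fun j _ ↦ iteratedDeriv_fun_mul (hB j) (hv j)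

lemma iteratedDeriv_eigenvector_equation {n : ℕ}
    (heig : ∀ᶠ t in 𝓝 t₀, A t *ᵥ v t = μ t • v t) (i : ι)
    (hA : ∀ j, ContDiffAt 𝕜 n (fun t ↦ A t i j) t₀) (hv : ∀ j, ContDiffAt 𝕜 n (fun t ↦ v t j) t₀)
    (hμ : ContDiffAt 𝕜 n μ t₀) :
    ∑ j, ∑ m ∈ Finset.range (n + 1), n.choose m * iteratedDeriv m (fun t ↦ A t i j) t₀ *
        iteratedDeriv (n - m) (fun t ↦ v t j) t₀ =
      ∑ m ∈ Finset.range (n + 1), n.choose m * iteratedDeriv m μ t₀ *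
        iteratedDeriv (n - m) (fun t ↦ v t i) t₀ := by
  rw [← iteratedDeriv_mulVec_apply i hA hv, ← iteratedDeriv_fun_mul hμ (hv i)]
  exact EventuallyEq.iteratedDeriv_eq n (heig.mono fun t ht ↦ congrFun ht i)

variable [DecidableEq ι] {d : ι → 𝕜} {k : ι}

lemma deriv_matrix_apply_eq_single_add (heig : ∀ᶠ t in 𝓝 t₀, A t *ᵥ v t = μ t • v t)
    (hA₀ : A t₀ = Matrix.diagonal d) (hv₀ : v t₀ = Pi.single k 1) (i : ι)
    (hA : ∀ j, DifferentiableAt 𝕜 (fun t ↦ A t i j) t₀)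
    (hv : ∀ j, DifferentiableAt 𝕜 (fun t ↦ v t j) t₀) (hμ : DifferentiableAt 𝕜 μ t₀) :
    deriv (fun t ↦ A t i k) t₀ =
      (Pi.single k (deriv μ t₀) : ι → 𝕜) i + (d k - d i) * deriv (fun t ↦ v t i) t₀ := by
  have hμ₀ : μ t₀ = d k :=
    eq_of_diagonal_mulVec_single_eq_smul (hA₀ ▸ hv₀ ▸ heig.self_of_nhds)
  have first_order : ∑ j, (deriv (fun t ↦ A t i j) t₀ * v t₀ j +
      A t₀ i j * deriv (fun t ↦ v t j) t₀) =
        deriv μ t₀ * v t₀ i + μ t₀ * deriv (fun t ↦ v t i) t₀ := by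
    have hrow : (fun t ↦ ∑ j, A t i j * v t j) =ᶠ[𝓝 t₀] fun t ↦ μ t * v t i :=
      heig.mono fun t ht ↦ congrFun ht i
    rw [← deriv_fun_mul hμ (hv i), ← hrow.deriv_eq,
      deriv_fun_sum fun j _ ↦ (hA j).fun_mul (hv j)]
    exact Finset.sum_congr rfl fun j _ ↦ (deriv_fun_mul (hA j) (hv j)).symm
  have first_order_at_single : deriv (fun t ↦ A t i k) t₀ + d i * deriv (fun t ↦ v t i) t₀ =
      (Pi.single k (deriv μ t₀) : ι → 𝕜) i + d k * deriv (fun t ↦ v t i) t₀ := by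
    simpa [Finset.sum_add_distrib, hA₀, hv₀, hμ₀, Matrix.diagonal_apply, Pi.single_apply]
      using first_order
  linear_combination first_order_at_single

lemma iteratedDeriv_two_eigenvalue_eq_sum_deriv_eigenvector
    (heig : ∀ᶠ t in 𝓝 t₀, A t *ᵥ v t = μ t • v t)
    (hA₀ : A t₀ = Matrix.diagonal d) (hv₀ : v t₀ = Pi.single k 1)
    (hA : ∀ j, ContDiffAt 𝕜 2 (fun t ↦ A t k j) t₀) (hv : ∀ j, ContDiffAt 𝕜 2 (fun t ↦ v t j) t₀)
    (hμ : ContDiffAt 𝕜 2 μ t₀) :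
    iteratedDeriv 2 μ t₀ = iteratedDeriv 2 (fun t ↦ A t k k) t₀ +
      2 * ∑ j ∈ Finset.univ.erase k, deriv (fun t ↦ A t k j) t₀ * deriv (fun t ↦ v t j) t₀ := by
  have hμ₀ : μ t₀ = d k :=
    eq_of_diagonal_mulVec_single_eq_smul (hA₀ ▸ hv₀ ▸ heig.self_of_nhds)
  have hμ' : deriv (fun t ↦ A t k k) t₀ = deriv μ t₀ := by
    simpa using deriv_matrix_apply_eq_single_add heig hA₀ hv₀ k
      (fun j ↦ (hA j).differentiableAt two_ne_zero)
      (fun j ↦ (hv j).differentiableAt two_ne_zero) (hμ.differentiableAt two_ne_zero)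
  have second_order : ∑ j, (A t₀ k j * iteratedDeriv 2 (fun t ↦ v t j) t₀ +
      2 * deriv (fun t ↦ A t k j) t₀ * deriv (fun t ↦ v t j) t₀ +
      iteratedDeriv 2 (fun t ↦ A t k j) t₀ * v t₀ j) =
        μ t₀ * iteratedDeriv 2 (fun t ↦ v t k) t₀ +
        2 * deriv μ t₀ * deriv (fun t ↦ v t k) t₀ + iteratedDeriv 2 μ t₀ * v t₀ k := by
    simpa [Finset.sum_range_succ] using iteratedDeriv_eigenvector_equation heig k hA hv hμ
  have second_order_at_single : d k * iteratedDeriv 2 (fun t ↦ v t k) t₀ +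
      2 * ∑ j, deriv (fun t ↦ A t k j) t₀ * deriv (fun t ↦ v t j) t₀ +
      iteratedDeriv 2 (fun t ↦ A t k k) t₀ =
        d k * iteratedDeriv 2 (fun t ↦ v t k) t₀ +
        2 * deriv μ t₀ * deriv (fun t ↦ v t k) t₀ + iteratedDeriv 2 μ t₀ := by
    simpa [Finset.sum_add_distrib, Finset.mul_sum, mul_assoc, hA₀, hv₀, hμ₀,
      Matrix.diagonal_apply, Pi.single_apply] using second_order
  rw [← Finset.add_sum_erase _ _ (Finset.mem_univ k), hμ'] at second_order_at_single
  linear_combination -second_order_at_single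

theorem iteratedDeriv_two_eigenvalue (heig : ∀ᶠ t in 𝓝 t₀, A t *ᵥ v t = μ t • v t)
    (hA₀ : A t₀ = Matrix.diagonal d) (hv₀ : v t₀ = Pi.single k 1) (hd : ∀ j ≠ k, d k ≠ d j)
    (hA : ∀ i j, ContDiffAt 𝕜 2 (fun t ↦ A t i j) t₀)
    (hv : ∀ j, ContDiffAt 𝕜 2 (fun t ↦ v t j) t₀) (hμ : ContDiffAt 𝕜 2 μ t₀) :
    iteratedDeriv 2 μ t₀ = iteratedDeriv 2 (fun t ↦ A t k k) t₀ +
      ∑ j ∈ Finset.univ.erase k,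
        2 * (deriv (fun t ↦ A t k j) t₀ * deriv (fun t ↦ A t j k) t₀) / (d k - d j) := by
  rw [iteratedDeriv_two_eigenvalue_eq_sum_deriv_eigenvector heig hA₀ hv₀ (hA k) hv hμ,
    Finset.mul_sum]
  congr 1
  refine Finset.sum_congr rfl fun j hj ↦ ?_
  have hjk : j ≠ k := Finset.ne_of_mem_erase hj
  have hA' : deriv (fun t ↦ A t j k) t₀ = (d k - d j) * deriv (fun t ↦ v t j) t₀ := by
    simpa [hjk] using deriv_matrix_apply_eq_single_add heig hA₀ hv₀ j
      (fun l ↦ (hA j l).differentiableAt two_ne_zero)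
      (fun l ↦ (hv l).differentiableAt two_ne_zero) (hμ.differentiableAt two_ne_zero)
  rw [hA', eq_div_iff (sub_ne_zero.2 (hd j hjk))]
  ring

end EigenvaluePerturbation

section DirectionalDerivative

variable {𝕜 E F : Type*} [NontriviallyNormedField 𝕜] [NormedAddCommGroup E] [NormedSpace 𝕜 E]
  [NormedAddCommGroup F] [NormedSpace 𝕜 F] {f : E → F} {x : E}

variable (𝕜) in
/-- The directional derivative `∂_w f` as a function of the base point. It is read off the Fréchet
derivative, so it is `0` wherever `f` is not differentiable. -/
noncomputable def dirDeriv (w : E) (f : E → F) (x : E) : F :=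
  fderiv 𝕜 f x w

lemma contDiffAt_dirDeriv {m n : WithTop ℕ∞} (hf : ContDiffAt 𝕜 n f x) (hmn : m + 1 ≤ n) (w : E) :
    ContDiffAt 𝕜 m (dirDeriv 𝕜 w f) x :=
  (hf.fderiv_right hmn).clm_apply contDiffAt_const

lemma dirDeriv_dirDeriv_apply (hf : ContDiffAt 𝕜 2 f x) (u w : E) :
    dirDeriv 𝕜 u (dirDeriv 𝕜 w f) x = fderiv 𝕜 (fderiv 𝕜 f) x u w := by
  have hf' : DifferentiableAt 𝕜 (fderiv 𝕜 f) x :=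
    (hf.fderiv_right (m := 1) (by norm_num)).differentiableAt one_ne_zero
  change fderiv 𝕜 (fun y ↦ fderiv 𝕜 f y w) x u = _
  simp [fderiv_clm_apply hf' (differentiableAt_const w)]

lemma dirDeriv_comm [IsRCLikeNormedField 𝕜] (hf : ContDiffAt 𝕜 2 f x) (u w : E) :
    dirDeriv 𝕜 u (dirDeriv 𝕜 w f) x = dirDeriv 𝕜 w (dirDeriv 𝕜 u f) x := by
  rw [dirDeriv_dirDeriv_apply hf, dirDeriv_dirDeriv_apply hf]
  exact hf.isSymmSndFDerivAt (by simp) u w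

lemma deriv_comp_line {w : E} {t : 𝕜} (hf : DifferentiableAt 𝕜 f (x + t • w)) :
    deriv (fun s : 𝕜 ↦ f (x + s • w)) t = dirDeriv 𝕜 w f (x + t • w) := by
  have hline : HasDerivAt (fun s : 𝕜 ↦ x + s • w) w t := by
    simpa using ((hasDerivAt_id t).smul_const w).const_add x
  exact (hf.hasFDerivAt.comp_hasDerivAt t hline).deriv

lemma tendsto_line (x w : E) : Tendsto (fun t : 𝕜 ↦ x + t • w) (𝓝 0) (𝓝 x) := by
  have hline : Continuous fun t : 𝕜 ↦ x + t • w := by fun_prop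
  simpa using hline.tendsto 0

lemma contDiffAt_comp_line {n : WithTop ℕ∞} (hf : ContDiffAt 𝕜 n f x) (w : E) :
    ContDiffAt 𝕜 n (fun t : 𝕜 ↦ f (x + t • w)) 0 :=
  ContDiffAt.comp 0 (by simpa using hf) (by fun_prop)

lemma iteratedDeriv_two_comp_line (hf : ContDiffAt 𝕜 2 f x) (w : E) :
    iteratedDeriv 2 (fun t : 𝕜 ↦ f (x + t • w)) 0 = dirDeriv 𝕜 w (dirDeriv 𝕜 w f) x := by
  have hderiv : deriv (fun t : 𝕜 ↦ f (x + t • w)) =ᶠ[𝓝 0] fun t ↦ dirDeriv 𝕜 w f (x + t • w) := by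
    filter_upwards [(tendsto_line x w).eventually (hf.eventually (by simp))] with t ht
    exact deriv_comp_line (ht.differentiableAt two_ne_zero)
  have hf' : DifferentiableAt 𝕜 (dirDeriv 𝕜 w f) (x + (0 : 𝕜) • w) := by
    simpa using (contDiffAt_dirDeriv (m := 1) hf (by norm_num) w).differentiableAt one_ne_zero
  rw [iteratedDeriv_succ, iteratedDeriv_one, hderiv.deriv_eq, deriv_comp_line hf', zero_smul,
    add_zero]

end DirectionalDerivative

section Hessian

variable {𝕜 E ι : Type*} [NontriviallyNormedField 𝕜] [NormedAddCommGroup E] [NormedSpace 𝕜 E]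
  {e : ι → E} {Ψ : E → 𝕜} {q : E}

variable (𝕜) in
/-- The Hessian of `Ψ` at `x` in the family of directions `e`: its `(i, j)` entry is
`∂_{e i} ∂_{e j} Ψ (x)`. -/
noncomputable def hessianMatrix (e : ι → E) (Ψ : E → 𝕜) (x : E) : Matrix ι ι 𝕜 :=
  Matrix.of fun i j ↦ dirDeriv 𝕜 (e i) (dirDeriv 𝕜 (e j) Ψ) x

lemma isSymm_hessianMatrix [IsRCLikeNormedField 𝕜] (hΨ : ContDiffAt 𝕜 2 Ψ q) :
    (hessianMatrix 𝕜 e Ψ q).IsSymm :=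
  Matrix.IsSymm.ext fun i j ↦ dirDeriv_comm hΨ (e j) (e i)

lemma contDiffAt_hessianMatrix_apply {m n : WithTop ℕ∞} (hΨ : ContDiffAt 𝕜 n Ψ q)
    (hmn : m + 1 + 1 ≤ n) (i j : ι) :
    ContDiffAt 𝕜 m (fun x ↦ hessianMatrix 𝕜 e Ψ x i j) q :=
  contDiffAt_dirDeriv (contDiffAt_dirDeriv hΨ hmn (e j)) le_rfl (e i)

theorem eigenframe_second_deriv_eigenvalue_general [IsRCLikeNormedField 𝕜]
    [Fintype ι] [DecidableEq ι] (hΨ : ContDiffAt 𝕜 4 Ψ q) {d : ι → 𝕜}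
    (hdiag : hessianMatrix 𝕜 e Ψ q = Matrix.diagonal d) {k : ι} (hd : ∀ j ≠ k, d k ≠ d j)
    {μ : E → 𝕜} {v : E → ι → 𝕜} (heig : ∀ᶠ x in 𝓝 q, hessianMatrix 𝕜 e Ψ x *ᵥ v x = μ x • v x)
    (hvq : v q = Pi.single k 1) (hμ : ContDiffAt 𝕜 2 μ q)
    (hv : ∀ j, ContDiffAt 𝕜 2 (fun x ↦ v x j) q) :
    dirDeriv 𝕜 (e k) (dirDeriv 𝕜 (e k) μ) q =
      dirDeriv 𝕜 (e k) (dirDeriv 𝕜 (e k) (dirDeriv 𝕜 (e k) (dirDeriv 𝕜 (e k) Ψ))) q +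
        ∑ j ∈ Finset.univ.erase k,
          2 * dirDeriv 𝕜 (e k) (dirDeriv 𝕜 (e k) (dirDeriv 𝕜 (e j) Ψ)) q ^ 2 / (d k - d j) := by
  have hH : ∀ i j, ContDiffAt 𝕜 2 (fun x ↦ hessianMatrix 𝕜 e Ψ x i j) q :=
    contDiffAt_hessianMatrix_apply hΨ (by norm_num)
  have hline := tendsto_line (𝕜 := 𝕜) q (e k)
  have hderiv : ∀ j, deriv (fun t : 𝕜 ↦ hessianMatrix 𝕜 e Ψ (q + t • e k) k j) 0 =
      dirDeriv 𝕜 (e k) (dirDeriv 𝕜 (e k) (dirDeriv 𝕜 (e j) Ψ)) q := fun j ↦ by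
    have hj : DifferentiableAt 𝕜 (fun x ↦ hessianMatrix 𝕜 e Ψ x k j) (q + (0 : 𝕜) • e k) := by
      simpa using (hH k j).differentiableAt two_ne_zero
    exact (deriv_comp_line hj).trans (by rw [zero_smul, add_zero]; rfl)
  have hsymm : ∀ j, deriv (fun t : 𝕜 ↦ hessianMatrix 𝕜 e Ψ (q + t • e k) j k) 0 =
      deriv (fun t : 𝕜 ↦ hessianMatrix 𝕜 e Ψ (q + t • e k) k j) 0 := fun j ↦ by
    refine EventuallyEq.deriv_eq ?_
    have hΨ₂ : ContDiffAt 𝕜 2 Ψ q := hΨ.of_le (by norm_num)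
    filter_upwards [hline.eventually (hΨ₂.eventually (by simp))] with t ht
    exact (isSymm_hessianMatrix ht).apply k j
  have key := iteratedDeriv_two_eigenvalue (hline.eventually heig) (by simpa using hdiag)
    (by simpa using hvq) hd (fun i j ↦ contDiffAt_comp_line (hH i j) (e k))
    (fun j ↦ contDiffAt_comp_line (hv j) (e k)) (contDiffAt_comp_line hμ (e k))
  simp only [hsymm, hderiv, ← sq] at key
  rwa [iteratedDeriv_two_comp_line hμ, iteratedDeriv_two_comp_line (hH k k)] at key

end Hessian

lemma pd_eq_dirDeriv (i : Fin 3) : pd i = dirDeriv ℝ (EuclideanSpace.single i 1) := rfl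

/-- Eigenframe identity for the second derivative of the first eigenvalue field:
`∂ₓ²λ₁ = T₁₁₁₁ + 2T₁₁₂²/(T₁₁ − T₂₂) + 2T₁₁₃²/(T₁₁ − T₃₃)`. -/
theorem eigenframe_second_deriv_eigenvalue
    (Ψ : EuclideanSpace ℝ (Fin 3) → ℝ) (hΨ : ContDiff ℝ 4 Ψ)
    (q : EuclideanSpace ℝ (Fin 3)) (l1 l2 l3 : ℝ)
    (hdiag : (Matrix.of fun i j => pd i (pd j Ψ) q) = Matrix.diagonal ![l1, l2, l3])
    (h12 : l1 ≠ l2) (h13 : l1 ≠ l3)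
    (μ : EuclideanSpace ℝ (Fin 3) → ℝ)
    (v : EuclideanSpace ℝ (Fin 3) → EuclideanSpace ℝ (Fin 3))
    (U : Set (EuclideanSpace ℝ (Fin 3))) (hU : U ∈ nhds q)
    (heig : ∀ x ∈ U, ∀ i : Fin 3, (∑ j : Fin 3, pd i (pd j Ψ) x * v x j) = μ x * v x i)
    (hnorm : ∀ x ∈ U, ‖v x‖ = 1)
    (hvq : v q = EuclideanSpace.single 0 1)
    (hμ : ContDiffAt ℝ 2 μ q) (hv : ContDiffAt ℝ 2 v q) :
    pd 0 (pd 0 μ) q =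
      pd 0 (pd 0 (pd 0 (pd 0 Ψ))) q
        + 2 * (pd 0 (pd 0 (pd 1 Ψ)) q) ^ 2 / (l1 - l2)
        + 2 * (pd 0 (pd 0 (pd 2 Ψ)) q) ^ 2 / (l1 - l3) := by
  have h := eigenframe_second_deriv_eigenvalue_general (e := fun i ↦ EuclideanSpace.single i 1)
    hΨ.contDiffAt hdiag (k := 0) (by simp [Fin.forall_fin_succ, h12, h13])
    (eventually_of_mem hU fun x hx ↦ funext (heig x hx)) (by simp [hvq]) hμ
    (contDiffAt_euclidean.1 hv)
  simpa [pd_eq_dirDeriv, show Finset.univ.erase (0 : Fin 3) = {1, 2} from rfl, add_assoc] using h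
end

section
/- Let R(α, β, γ) be the ZYZ Euler rotation matrix with α, γ ∈ (−π, π] and β ∈ (0, π). Then the Euler angles are recovered from the matrix entries by the two-argument arctangent: atan2(R₂₃, R₁₃) = α, atan2(√(R₁₃² + R₂₃²), R₃₃) = β, and atan2(R₃₂, −R₃₁) = γ, where Rᵢⱼ denotes the (i,j) entry of R(α, β, γ). -/
open Real Matrix

/-- The two-argument arctangent: `atan2 y x = arg (x + iy) ∈ (−π, π]`. -/
noncomputable def atan2 (y x : ℝ) : ℝ :=
  Complex.arg (x + y * Complex.I)

theorem atan2_mul_right {r : ℝ} (hr : 0 < r) (y x : ℝ) : atan2 (y * r) (x * r) = atan2 y x := by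
  unfold atan2
  rw [← Complex.arg_real_mul (x + y * Complex.I) hr]
  push_cast
  ring_nf

theorem atan2_sin_cos {θ : ℝ} (hθ : θ ∈ Set.Ioc (-π) π) : atan2 (sin θ) (cos θ) = θ := by
  simpa [atan2] using Complex.arg_cos_add_sin_mul_I hθ

theorem sqrt_cos_mul_sq_add_sin_mul_sq (θ r : ℝ) :
    √((cos θ * r) ^ 2 + (sin θ * r) ^ 2) = |r| := by
  rw [mul_pow, mul_pow, ← add_mul, cos_sq_add_sin_sq, one_mul, sqrt_sq_eq_abs]

/-- Recovery of the ZYZ-convention Euler angles (with `α, γ ∈ (−π, π]`, `β ∈ (0, π)`)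
from the entries of the Euler rotation matrix via the two-argument arctangent. -/
theorem euler_angles_from_rotation_matrix
    (α β γ : ℝ) (hα : α ∈ Set.Ioc (-π) π) (hβ : β ∈ Set.Ioo 0 π) (hγ : γ ∈ Set.Ioc (-π) π)
    (R : Matrix (Fin 3) (Fin 3) ℝ)
    (hR : R = Matrix.of
      ![![cos α * cos β * cos γ - sin α * sin γ,
          -(cos α * cos β * sin γ) - cos γ * sin α,
          cos α * sin β],
        ![cos β * cos γ * sin α + cos α * sin γ,
          cos α * cos γ - cos β * sin α * sin γ,
          sin α * sin β],
        ![-(cos γ * sin β), sin β * sin γ, cos β]]) :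
    atan2 (R 1 2) (R 0 2) = α ∧
    atan2 (Real.sqrt (R 0 2 ^ 2 + R 1 2 ^ 2)) (R 2 2) = β ∧
    atan2 (R 2 1) (-(R 2 0)) = γ := by
  have sin_β_pos : 0 < sin β := sin_pos_of_mem_Ioo hβ
  have hβ' : β ∈ Set.Ioc (-π) π := ⟨(neg_lt_zero.mpr pi_pos).trans hβ.1, hβ.2.le⟩
  have h₀₂ : R 0 2 = cos α * sin β := by rw [hR]; rfl
  have h₁₂ : R 1 2 = sin α * sin β := by rw [hR]; rfl
  have h₂₀ : R 2 0 = -(cos γ * sin β) := by rw [hR]; rfl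
  have h₂₁ : R 2 1 = sin β * sin γ := by rw [hR]; rfl
  have h₂₂ : R 2 2 = cos β := by rw [hR]; rfl
  refine ⟨?_, ?_, ?_⟩
  · rw [h₁₂, h₀₂, atan2_mul_right sin_β_pos, atan2_sin_cos hα]
  · rw [h₀₂, h₁₂, h₂₂, sqrt_cos_mul_sq_add_sin_mul_sq, abs_of_pos sin_β_pos, atan2_sin_cos hβ']
  · rw [h₂₁, h₂₀, neg_neg, mul_comm (sin β), atan2_mul_right sin_β_pos, atan2_sin_cos hγ]
end
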